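/- Let Σ be an alphabet containing at least two distinct symbols. Then the copy language { w ++ w : w a word over Σ } is not context-free. -/

import Mathlib

/-!
The proof rests on a form of the interchange lemma of Ogden, Ross and Winklmann: among many words
of equal length in a context-free language there are two whose factors at a common window
may be exchanged without leaving the language, because both factors are derived from the
same nonterminal.

Squares `t ++ t` do not tolerate such exchanges. Each letter of `t` occurs at two positions at
distance `|t|`, so a window of length at most `|t|` misses one of them, and a square is determined
by its letters outside the window. Hence the exchanged factors were equal to begin with. For squares
with period `l`, a window of length at least `l` determines the whole word. There are `2 ^ l` of
them over two letters, too many for the polynomial bound of the interchange lemma.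
-/

open Finset

section ParseForests

variable {α : Type*} {g : ContextFreeGrammar α} {β γ : List (Symbol α g.NT)} {w : List α}

/-- `Yields g β w` says that `w` is the yield of a parse forest of the grammar `g` with the list of
roots `β`. It is equivalent to `g.Derives β (w.map .terminal)`, but its induction principle follows
the parse trees instead of the rewriting steps. -/
inductive Yields (g : ContextFreeGrammar α) : List (Symbol α g.NT) → List α → Prop
  | nil : Yields g [] []
  | terminal (a : α) {β : List (Symbol α g.NT)} {w : List α} (hβ : Yields g β w) :
      Yields g (.terminal a :: β) (a :: w)
  | nonterminal {r : ContextFreeRule α g.NT} (hr : r ∈ g.rules) {β : List (Symbol α g.NT)}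
      {x w : List α} (hx : Yields g r.output x) (hβ : Yields g β w) :
      Yields g (.nonterminal r.input :: β) (x ++ w)

lemma Yields.map_terminal (w : List α) : Yields g (w.map .terminal) w := by
  induction w with
  | nil => exact .nil
  | cons a w ih => exact .terminal a ih

lemma Yields.exists_of_append (h : Yields g (β ++ γ) w) :
    ∃ u v, w = u ++ v ∧ Yields g β u ∧ Yields g γ v := by
  induction β generalizing w with
  | nil => exact ⟨[], w, rfl, .nil, h⟩
  | cons s β ih =>
    cases h with
    | terminal a h =>
      obtain ⟨u, v, rfl, hu, hv⟩ := ih h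
      exact ⟨a :: u, v, rfl, .terminal a hu, hv⟩
    | @nonterminal r hr _ x _ hx h =>
      obtain ⟨u, v, rfl, hu, hv⟩ := ih h
      exact ⟨x ++ u, v, (List.append_assoc ..).symm, .nonterminal hr hx hu, hv⟩

lemma Yields.of_rewrites {r : ContextFreeRule α g.NT} (hr : r ∈ g.rules) (h : r.Rewrites β γ)
    (hγ : Yields g γ w) : Yields g β w := by
  induction h generalizing w with
  | head s =>
    obtain ⟨x, v, rfl, hx, hv⟩ := hγ.exists_of_append
    exact .nonterminal hr hx hv
  | cons s _ ih =>
    cases hγ with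
    | terminal a h => exact .terminal a (ih h)
    | nonterminal hr' hx h => exact .nonterminal hr' hx (ih h)

lemma Yields.of_derives (h : g.Derives β (w.map .terminal)) : Yields g β w := by
  induction h using Relation.ReflTransGen.head_induction_on with
  | refl => exact .map_terminal w
  | head hstep _ ih =>
    obtain ⟨r, hr, hrw⟩ := hstep
    exact .of_rewrites hr hrw ih

lemma derives_nonterminal_cons {r : ContextFreeRule α g.NT} (hr : r ∈ g.rules)
    {x δ : List (Symbol α g.NT)} (hx : g.Derives r.output x) (hβ : g.Derives β δ) :
    g.Derives (.nonterminal r.input :: β) (x ++ δ) :=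
  have hinput : g.Derives [.nonterminal r.input] x :=
    .trans (.single ⟨r, hr, .input_output⟩) hx
  (hinput.append_right β).trans (hβ.append_left x)

lemma Yields.derives (h : Yields g β w) : g.Derives β (w.map .terminal) := by
  induction h with
  | nil => rfl
  | terminal a _ ih => exact ih.append_left [.terminal a]
  | nonterminal hr _ _ ihx ihw =>
    rw [List.map_append]
    exact derives_nonterminal_cons hr ihx ihw

/-- If a sentential form of at most `n` symbols yields more than `n * l` letters, one of its symbols
yields more than `l`. Going down the parse forest along such symbols, the first subtree whose yield
has at most `k * l` letters is the one sought. -/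
lemma Yields.exists_factor {k l : ℕ} (hk : ∀ r ∈ g.rules, r.output.length ≤ k) (hl : 0 < l)
    (h : Yields g β w) (hw : β.length * l < w.length) :
    ∃ r ∈ g.rules, ∃ u x v, w = u ++ x ++ v ∧ l < x.length ∧ x.length ≤ k * l ∧
      g.Derives β (u.map .terminal ++ [.nonterminal r.input] ++ v.map .terminal) ∧
      g.Derives [.nonterminal r.input] (x.map .terminal) := by
  induction h with
  | nil => simp at hw
  | terminal a hβ ih =>
    rw [List.length_cons, List.length_cons, add_one_mul] at hw
    obtain ⟨r, hr, u, x, v, rfl, hlx, hxk, hβu, hrx⟩ := ih (by lia)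
    exact ⟨r, hr, a :: u, x, v, rfl, hlx, hxk, hβu.append_left [.terminal a], hrx⟩
  | @nonterminal r hr β y w hy hβ ihy ihw =>
    rw [List.length_cons, List.length_append, add_one_mul] at hw
    by_cases hβw : β.length * l < w.length
    · obtain ⟨s, hs, u, x, v, rfl, hlx, hxk, hβu, hsx⟩ := ihw hβw
      refine ⟨s, hs, y ++ u, x, v, by simp, hlx, hxk, ?_, hsx⟩
      simpa using derives_nonterminal_cons hr hy.derives hβu
    have hly : l < y.length := by lia
    by_cases hyk : y.length ≤ k * l
    · refine ⟨r, hr, [], y, w, rfl, hly, hyk, hβ.derives.append_left [_], ?_⟩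
      simpa using derives_nonterminal_cons hr hy.derives (.refl [])
    · have hy_long : r.output.length * l < y.length :=
        (Nat.mul_le_mul_right l (hk r hr)).trans_lt (not_le.mp hyk)
      obtain ⟨s, hs, u, x, v, rfl, hlx, hxk, hyu, hsx⟩ := ihy hy_long
      refine ⟨s, hs, u, x, v ++ w, by simp, hlx, hxk, ?_, hsx⟩
      simpa using derives_nonterminal_cons hr hyu hβ.derives

end ParseForests

section Interchange

variable {α : Type*} {i j m : ℕ} {z z' : List α}

/-- The word `z` with its factor at the window `[i, i + m)` replaced by the factor of `z'` at the
same window; meaningful when both words have length at least `i + m`. -/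
def interchange (i m : ℕ) (z z' : List α) : List α :=
  z.take i ++ (z'.drop i).take m ++ z.drop (i + m)

lemma length_interchange (hz : i + m ≤ z.length) (hz' : i + m ≤ z'.length) :
    (interchange i m z z').length = z.length := by
  simp only [interchange, List.length_append, List.length_take, List.length_drop]
  lia

lemma getElem?_interchange (hz : i + m ≤ z.length) (hz' : i + m ≤ z'.length) :
    (interchange i m z z')[j]? = if i ≤ j ∧ j < i + m then z'[j]? else z[j]? := by
  have hprefix : (z.take i).length = i := List.length_take_of_le (by lia)
  have hfactor : ((z'.drop i).take m).length = m :=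
    List.length_take_of_le (by rw [List.length_drop]; lia)
  simp only [interchange, List.getElem?_append, List.length_append, hprefix, hfactor]
  grind

/-- The word `z` has a derivation in `g` in which the left-hand side of the rule `r` derives exactly
the factor of `z` at the window `[i, i + m)`. The nonterminal is given through a rule because the
rules of `g` are finite in number and its nonterminals need not be. -/
def DerivesWindow (g : ContextFreeGrammar α) (r : ContextFreeRule α g.NT) (i m : ℕ)
    (z : List α) : Prop :=
  g.Derives [.nonterminal g.initial]
      ((z.take i).map .terminal ++ [.nonterminal r.input] ++ (z.drop (i + m)).map .terminal) ∧
    g.Derives [.nonterminal r.input] (((z.drop i).take m).map .terminal)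

lemma DerivesWindow.interchange_mem_language {g : ContextFreeGrammar α}
    {r : ContextFreeRule α g.NT} (hz : DerivesWindow g r i m z) (hz' : DerivesWindow g r i m z') :
    interchange i m z z' ∈ g.language := by
  have hfactor := (hz'.2.append_left ((z.take i).map .terminal)).append_right
    ((z.drop (i + m)).map .terminal)
  simpa [interchange] using hz.1.trans hfactor

lemma exists_derivesWindow {g : ContextFreeGrammar α} {k l : ℕ}
    (hk : ∀ r ∈ g.rules, r.output.length ≤ k) (hl : 0 < l) (hz : z ∈ g.language)
    (hlz : l < z.length) :
    ∃ r ∈ g.rules, ∃ i m, l < m ∧ m ≤ k * l ∧ i + m ≤ z.length ∧ DerivesWindow g r i m z := by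
  obtain ⟨r, hr, u, x, v, rfl, hlx, hxk, hu, hx⟩ :=
    (Yields.of_derives hz).exists_factor hk hl (by simpa using hlz)
  refine ⟨r, hr, u.length, x.length, hlx, hxk, by simp, ?_, ?_⟩
  · simpa [← List.drop_drop] using hu
  · simpa using hx

/-- Label each word by one of its windows and a rule for the nonterminal deriving the factor there.
Words with the same label admit interchange, and there are at most `#g.rules * (n + 1) ^ 2` labels
for words of length `n`. -/
theorem exists_interchange {L : Language α} (hL : L.IsContextFree) :
    ∃ c k : ℕ, ∀ (n l N : ℕ) (R : Finset (List α)), 0 < l → l < n →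
      (∀ z ∈ R, z ∈ L ∧ z.length = n) → c * (n + 1) ^ 2 * N < #R →
      ∃ Z ⊆ R, N < #Z ∧ ∃ i m, l < m ∧ m ≤ k * l ∧ i + m ≤ n ∧
        ∀ z ∈ Z, ∀ z' ∈ Z, interchange i m z z' ∈ L := by
  classical
  obtain ⟨g, rfl⟩ := hL
  let k := g.rules.sup fun r => r.output.length
  have hk : ∀ r ∈ g.rules, r.output.length ≤ k := fun r hr =>
    le_sup (f := fun r : ContextFreeRule α g.NT => r.output.length) hr
  refine ⟨#g.rules, k, fun n l N R hl hln hR hcard => ?_⟩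
  have hlabel : ∀ z ∈ R, ∃ label : ContextFreeRule α g.NT × ℕ × ℕ, label.1 ∈ g.rules ∧
      l < label.2.2 ∧ label.2.2 ≤ k * l ∧ label.2.1 + label.2.2 ≤ n ∧
      DerivesWindow g label.1 label.2.1 label.2.2 z := fun z hz => by
    obtain ⟨hzL, rfl⟩ := hR z hz
    obtain ⟨r, hr, i, m, h⟩ := exists_derivesWindow hk hl hzL hln
    exact ⟨(r, i, m), hr, h⟩
  have : Nonempty (ContextFreeRule α g.NT) := ⟨⟨g.initial, []⟩⟩
  choose! f hf using hlabel
  let labels := g.rules ×ˢ range (n + 1) ×ˢ range (n + 1)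
  have hf_mem : ∀ z ∈ R, f z ∈ labels := fun z hz => by
    obtain ⟨hr, -, -, hn, -⟩ := hf z hz
    simp only [labels, mem_product, mem_range]
    exact ⟨hr, by lia, by lia⟩
  have hcard_labels : #labels = #g.rules * (n + 1) ^ 2 := by
    simp [labels, sq]
  obtain ⟨⟨r, i, m⟩, -, hN⟩ :=
    exists_lt_card_fiber_of_mul_lt_card_of_maps_to hf_mem (hcard_labels ▸ hcard)
  have hZ : ∀ z ∈ R.filter (f · = (r, i, m)), l < m ∧ m ≤ k * l ∧ i + m ≤ n ∧
      DerivesWindow g r i m z := fun z hz => by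
    obtain ⟨hzR, hfz⟩ := mem_filter.mp hz
    simpa [hfz] using (hf z hzR).2
  obtain ⟨z, hz⟩ := card_pos.mp (N.zero_le.trans_lt hN)
  obtain ⟨hlm, hmk, him, -⟩ := hZ z hz
  exact ⟨_, filter_subset _ _, hN, i, m, hlm, hmk, him, fun z hz z' hz' =>
    (hZ z hz).2.2.2.interchange_mem_language (hZ z' hz').2.2.2⟩

end Interchange

section Squares

variable {α : Type*}

lemma eq_of_append_self_eq_off_window {t t' : List α} (hlen : t.length = t'.length) (i : ℕ)
    (h : ∀ j, j < i ∨ i + t.length ≤ j → (t ++ t)[j]? = (t' ++ t')[j]?) : t = t' := by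
  refine List.ext_getElem? fun j => ?_
  rcases lt_or_ge j t.length with hj | hj
  · by_cases hji : j < i
    · simpa [List.getElem?_append_left, hj, ← hlen] using h j (.inl hji)
    · simpa [List.getElem?_append_right, ← hlen] using h (t.length + j) (.inr (by lia))
  · rw [List.getElem?_eq_none hj, List.getElem?_eq_none (hlen ▸ hj)]

lemma interchange_append_self_eq {i m : ℕ} {t t' z' : List α} (hmt : m ≤ t.length)
    (hi : i + m ≤ (t ++ t).length) (hz' : i + m ≤ z'.length)
    (ht' : interchange i m (t ++ t) z' = t' ++ t') : interchange i m (t ++ t) z' = t ++ t := by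
  have hlen : t.length = t'.length := by
    have := length_interchange hi hz'
    simp only [ht', List.length_append] at this
    lia
  have htt' : t = t' := eq_of_append_self_eq_off_window hlen i fun j hj => by
    rw [← ht', getElem?_interchange hi hz', if_neg (by lia)]
  rw [ht', htt']

end Squares

section PeriodicWords

variable {α : Type*} {l : ℕ}

/-- The word of length `n` with period `l` whose letter at position `j` is `s (j mod l)`.
For `l = 0`, where `ZMod l` is `ℤ`, no period is imposed. -/
def periodicWord (s : ZMod l → α) (n : ℕ) : List α :=
  (List.range n).map fun j : ℕ => s j

@[simp]
lemma length_periodicWord (s : ZMod l → α) (n : ℕ) : (periodicWord s n).length = n := by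
  simp [periodicWord]

lemma getElem?_periodicWord (s : ZMod l → α) {n j : ℕ} (hj : j < n) :
    (periodicWord s n)[j]? = some (s j) := by
  simp [periodicWord, hj]

lemma periodicWord_add {m : ℕ} (hm : (m : ZMod l) = 0) (s : ZMod l → α) (n : ℕ) :
    periodicWord s (m + n) = periodicWord s m ++ periodicWord s n := by
  simp [periodicWord, List.range_add, Function.comp_def, hm]

lemma eq_of_periodicWord_eq_on_window [NeZero l] {s s' : ZMod l → α} {i n : ℕ} (hi : i + l ≤ n)
    (h : ∀ j, i ≤ j → j < i + l → (periodicWord s n)[j]? = (periodicWord s' n)[j]?) :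
    s = s' := by
  funext x
  obtain ⟨j, hij, hji, rfl⟩ : ∃ j, i ≤ j ∧ j < i + l ∧ (j : ZMod l) = x :=
    ⟨i + (x - i).val, by lia, by have := (x - i).val_lt; lia, by simp⟩
  have hjn : j < n := hji.trans_le hi
  have hj := h j hij hji
  rwa [getElem?_periodicWord s hjn, getElem?_periodicWord s' hjn, Option.some_inj] at hj

lemma card_image_periodicWord_piFinset [DecidableEq α] [NeZero l] {n : ℕ} (hl : l ≤ n)
    (A : Finset α) :
    #((Fintype.piFinset fun _ : ZMod l => A).image (periodicWord · n)) = #A ^ l := by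
  have hinj : Function.Injective fun s : ZMod l → α => periodicWord s n := fun _ _ h =>
    eq_of_periodicWord_eq_on_window (i := 0) (by rwa [zero_add]) fun j _ _ => congrArg (·[j]?) h
  rw [card_image_of_injective _ hinj, Fintype.card_piFinset, prod_const, card_univ, ZMod.card]

lemma eq_of_interchange_periodicWord_eq_append_self [NeZero l] {n i m : ℕ} {s s' : ZMod l → α}
    {t : List α} (hn : (n : ZMod l) = 0) (hlm : l ≤ m) (hmn : m ≤ n) (hi : i + m ≤ n + n)
    (ht : interchange i m (periodicWord s (n + n)) (periodicWord s' (n + n)) = t ++ t) :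
    s = s' := by
  have hunchanged : interchange i m (periodicWord s (n + n)) (periodicWord s' (n + n)) =
      periodicWord s (n + n) := by
    rw [periodicWord_add hn s] at ht ⊢
    exact interchange_append_self_eq (by simpa using hmn) (by simpa using hi) (by simpa using hi) ht
  refine eq_of_periodicWord_eq_on_window (i := i) (n := n + n) (by lia) fun j hij hji => ?_
  rw [← hunchanged, getElem?_interchange (by simpa using hi) (by simpa using hi),
    if_pos (by lia)]

end PeriodicWords

lemma exists_mul_pow_lt_two_pow (c q d : ℕ) : ∃ l, 0 < l ∧ c * (q * l + 1) ^ d < 2 ^ l := by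
  let m := c * ((d + 1) * (q + 1)) ^ d + 1
  have hlin : q * ((d + 1) * m) + 1 ≤ (d + 1) * (q + 1) * m := by
    have : 0 < (d + 1) * m := by positivity
    linarith
  refine ⟨(d + 1) * m, by positivity, ?_⟩
  calc c * (q * ((d + 1) * m) + 1) ^ d
      ≤ c * ((d + 1) * (q + 1) * m) ^ d := by gcongr
    _ = c * ((d + 1) * (q + 1)) ^ d * m ^ d := by rw [mul_pow, mul_assoc]
    _ < m * m ^ d := by gcongr; exact Nat.lt_succ_self _
    _ = m ^ (d + 1) := (pow_succ' m d).symm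
    _ ≤ (2 ^ m) ^ (d + 1) := by gcongr; exact Nat.lt_two_pow_self.le
    _ = 2 ^ ((d + 1) * m) := by rw [← pow_mul, mul_comm]

theorem copy_language_not_contextFree_general (α : Type*) [Nontrivial α] :
    ¬ Language.IsContextFree {w : List α | ∃ t : List α, w = t ++ t} := by
  classical
  intro hL
  obtain ⟨a, b, hab⟩ := exists_pair_ne α
  obtain ⟨c, k, hck⟩ := exists_interchange hL
  obtain ⟨l, hl, hlarge⟩ := exists_mul_pow_lt_two_pow c (2 * (k + 1)) 2
  have : NeZero l := ⟨hl.ne'⟩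
  let n := (k + 1) * l
  have hln : l ≤ n := Nat.le_mul_of_pos_left l k.succ_pos
  have hkn : k * l ≤ n := Nat.mul_le_mul_right l k.le_succ
  have hn : (n : ZMod l) = 0 := by simp [n]
  let R := (Fintype.piFinset fun _ : ZMod l => {a, b}).image (periodicWord · (n + n))
  have hR : ∀ z ∈ R, (∃ t, z = t ++ t) ∧ z.length = n + n :=
    forall_mem_image.mpr fun s _ => ⟨⟨_, periodicWord_add hn s n⟩, length_periodicWord s _⟩
  have hcard : c * (n + n + 1) ^ 2 * 1 < #R := by
    rw [card_image_periodicWord_piFinset (le_add_left hln), card_pair hab]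
    convert hlarge using 1
    ring
  obtain ⟨Z, hZR, hZ, i, m, hlm, hmk, him, hmem⟩ := hck (n + n) l 1 R hl (by lia) hR hcard
  obtain ⟨z, hz, z', hz', hne⟩ := one_lt_card.mp hZ
  obtain ⟨t, ht⟩ := hmem z hz z' hz'
  obtain ⟨s, -, rfl⟩ := mem_image.mp (hZR hz)
  obtain ⟨s', -, rfl⟩ := mem_image.mp (hZR hz')
  exact hne (by rw [eq_of_interchange_periodicWord_eq_append_self hn hlm.le (hmk.trans hkn) him ht])

theorem copy_language_not_contextFree {α : Type} (a b : α) (hab : a ≠ b) :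
    ¬ Language.IsContextFree {w : List α | ∃ t : List α, w = t ++ t} :=
  have : Nontrivial α := ⟨a, b, hab⟩
  copy_language_not_contextFree_general α
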